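/- For every positive integer k, if a tree T contains a (2k+1)-thread both of whose ends are adjacent to vertices of degree 3 (i.e., T contains a path u_1, v_1, v_2, …, v_{2k+1}, u_2 where d_T(u_1) = d_T(u_2) = 3 and d_T(v_i) = 2 for all i = 1, …, 2k+1), then χ'_irr(T) ≤ 2, i.e., T admits a locally irregular edge-coloring using at most 2 colors. -/

import Mathlib

/-- A graph is *locally irregular* if no two adjacent vertices have the same degree. -/
def LocallyIrregular {V : Type*} (G : SimpleGraph V) : Prop :=
  ∀ ⦃u v : V⦄, G.Adj u v → (G.neighborSet u).ncard ≠ (G.neighborSet v).ncard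

/-- `HasLIEC G k` : `G` admits a locally irregular edge-coloring using at most `k` colors,
i.e. an assignment of one of `k` colors to every edge such that the edges of each fixed
color induce a locally irregular graph. -/
def HasLIEC {V : Type*} (G : SimpleGraph V) (k : ℕ) : Prop :=
  ∃ c : Sym2 V → Fin k, ∀ i : Fin k,
    LocallyIrregular (SimpleGraph.fromEdgeSet {e | e ∈ G.edgeSet ∧ c e = i})

/-!
Root the tree at the first edge `u₁v₁` of the thread. Up to swapping the colors, a 2-edge-coloring
is determined by the sets `R x` of children of `x` whose edge to `x` has the color of the parent
edge of `x`. The vertex `x` has `#(R x) + 1` edges of that color, and its edges of the other color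
lead to the children outside `R x`, so the sets `R x` can be chosen from the leaves upwards.
Whatever happens below `x`, a counting argument yields a set `R x` for which no edge from `x` to a
child joins two vertices of the same color degree, and this set is nonempty once `x` has two
children. What remains is the root edge, which needs `#(R u₁) ≠ #(R v₁)`. On the thread one can let
`R` be alternately nonempty (at `u₂`) and empty; as the thread is odd, `R v₁` is empty and `R u₁`
is not.
-/

open Finset

section Admissible

variable {α : Type*} [DecidableEq α] {D S : Finset α} {a b : α → ℕ}

/-- The choice to be made at one vertex `x` of a rooted tree. The children of `x` are the elements
of `D`, and `a y` is the degree of the child `y` in the color of `xy`; the children in `S` are those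
joined to `x` by an edge with the color of the parent edge of `x`. Hence `x` has degree `#S + 1` in
that color and `#(D \ S)` in the other one. -/
structure IsAdmissible (D : Finset α) (a : α → ℕ) (S : Finset α) : Prop where
  subset : S ⊆ D
  ne_of_mem : ∀ y ∈ S, a y ≠ #S + 1
  ne_of_mem_sdiff : ∀ y ∈ D \ S, a y ≠ #(D \ S)

lemma IsAdmissible.congr (h : IsAdmissible D a S) (hab : ∀ y ∈ D, a y = b y) :
    IsAdmissible D b S where
  subset := h.subset
  ne_of_mem y hy := hab y (h.subset hy) ▸ h.ne_of_mem y hy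
  ne_of_mem_sdiff y hy := hab y (sdiff_subset hy) ▸ h.ne_of_mem_sdiff y hy

lemma isAdmissible_empty (h : ∀ y ∈ D, a y ≠ #D) : IsAdmissible D a ∅ where
  subset := empty_subset D
  ne_of_mem := by simp
  ne_of_mem_sdiff := by simpa using h

lemma isAdmissible_self (h : ∀ y ∈ D, a y ≠ #D + 1) : IsAdmissible D a D where
  subset := Subset.rfl
  ne_of_mem := h
  ne_of_mem_sdiff := by simp

lemma exists_isAdmissible_card_eq {t : ℕ} (ht : t ≤ #D) (hne : 2 * t = #D + 1 → ∀ y ∈ D, a y ≠ t)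
    (hlow : #{y ∈ D | a y = t} ≤ #D - t) (hhigh : #{y ∈ D | a y + t = #D + 1} ≤ t) :
    ∃ S, IsAdmissible D a S ∧ #S = #D - t := by
  have hsub : {y ∈ D | a y = t} ⊆ D \ {y ∈ D | a y + t = #D + 1} := fun y hy ↦ by
    simp only [mem_sdiff, mem_filter] at hy ⊢
    exact ⟨hy.1, fun h ↦ hne (by omega) y hy.1 hy.2⟩
  have hcard : #(D \ {y ∈ D | a y + t = #D + 1}) + #{y ∈ D | a y + t = #D + 1} = #D :=
    card_sdiff_add_card_eq_card (filter_subset _ D)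
  obtain ⟨S, hlowS, hSD, hS⟩ := exists_subsuperset_card_eq hsub hlow (by omega)
  have hDS : #(D \ S) = t := by
    rw [card_sdiff_of_subset (hSD.trans sdiff_subset), hS, Nat.sub_sub_self ht]
  refine ⟨S, ⟨hSD.trans sdiff_subset, fun y hy h ↦ ?_, fun y hy h ↦ ?_⟩, hS⟩
  · obtain ⟨hyD, hy'⟩ := mem_sdiff.1 (hSD hy)
    exact hy' (mem_filter.2 ⟨hyD, by omega⟩)
  · obtain ⟨hyD, hyS⟩ := mem_sdiff.1 hy
    exact hyS (hlowS (mem_filter.2 ⟨hyD, h.trans hDS⟩))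

/-- The elements of `D` that can prevent a set `S ⊆ D` with `#S = #D - t` from being admissible:
those with `a y = #(D \ S)` cannot be left out of `S` and those with `a y = #S + 1` cannot be put
into it. -/
def obstructions (D : Finset α) (a : α → ℕ) (t : ℕ) : Finset α :=
  {y ∈ D | a y = t ∨ a y + t = #D + 1}

lemma exists_isAdmissible_of_card_obstructions_le {t : ℕ} (ht : 2 * t ≤ #D)
    (h : #(obstructions D a t) ≤ t) : ∃ S, IsAdmissible D a S ∧ #S = #D - t := by
  have hlow : #{y ∈ D | a y = t} ≤ #(obstructions D a t) :=
    card_le_card (monotone_filter_right D fun _ _ ↦ Or.inl)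
  have hhigh : #{y ∈ D | a y + t = #D + 1} ≤ #(obstructions D a t) :=
    card_le_card (monotone_filter_right D fun _ _ ↦ Or.inr)
  exact exists_isAdmissible_card_eq (by omega) (by omega) (by omega) (by omega)

lemma exists_isAdmissible_of_obstructions_eq_empty {t : ℕ} (ht : 2 * t = #D + 1) (hD : D.Nonempty)
    (h : obstructions D a t = ∅) : ∃ S, IsAdmissible D a S ∧ #S = #D - t := by
  have hne : ∀ y ∈ D, a y ≠ t ∧ a y + t ≠ #D + 1 := by
    simpa [obstructions, filter_eq_empty_iff] using h
  have hlow : {y ∈ D | a y = t} = ∅ := filter_eq_empty_iff.2 fun y hy ↦ (hne y hy).1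
  have hhigh : {y ∈ D | a y + t = #D + 1} = ∅ := filter_eq_empty_iff.2 fun y hy ↦ (hne y hy).2
  have := hD.card_pos
  exact exists_isAdmissible_card_eq (by omega) (fun _ y hy ↦ (hne y hy).1) (by simp [hlow])
    (by simp [hhigh])

omit [DecidableEq α] in
lemma sum_card_obstructions_le {n : ℕ} (hn : 2 * n ≤ #D + 3) :
    ∑ t ∈ range n, #(obstructions D a t) ≤ #D := by
  classical
  rw [← card_biUnion]
  · exact card_le_card (biUnion_subset.2 fun t _ ↦ filter_subset _ D)
  · intro s hs t ht hst
    simp only [coe_range, Set.mem_Iio] at hs ht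
    refine disjoint_left.2 fun y hys hyt ↦ ?_
    simp only [obstructions, mem_filter] at hys hyt
    omega

lemma two_mul_lt_sum_range_succ (n : ℕ) : 2 * n < ∑ t ∈ range (n + 1), (t + 1) := by
  induction n with
  | zero => simp
  | succ n ih => rw [sum_range_succ]; omega

/-- If no set of size at least `(#D - 1) / 2` were admissible, every `t ≤ #D / 2` would have more
than `t` obstructions and, when `#D` is odd, `t = (#D + 1) / 2` at least one. These obstructions
are disjoint and there are too many of them. -/
theorem exists_isAdmissible (D : Finset α) (a : α → ℕ) :
    ∃ S, IsAdmissible D a S ∧ #D ≤ 2 * #S + 1 := by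
  by_contra! hnone
  have hmany : ∀ t, 2 * t ≤ #D → t + 1 ≤ #(obstructions D a t) := fun t ht ↦ by
    by_contra! hlt
    obtain ⟨S, hS, hcard⟩ := exists_isAdmissible_of_card_obstructions_le ht (Nat.le_of_lt_succ hlt)
    have := hnone S hS
    omega
  obtain ⟨m, hm⟩ := Nat.even_or_odd' #D
  have hsum : 2 * m < ∑ t ∈ range (m + 1), #(obstructions D a t) :=
    (two_mul_lt_sum_range_succ m).trans_le <|
      sum_le_sum fun t ht ↦ hmany t (by have := mem_range.1 ht; omega)
  obtain hm | hm := hm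
  · have := sum_card_obstructions_le (D := D) (a := a) (n := m + 1) (by omega)
    omega
  · have hmiddle : 0 < #(obstructions D a (m + 1)) := by
      refine card_pos.2 (nonempty_iff_ne_empty.2 fun hempty ↦ ?_)
      obtain ⟨S, hS, hcard⟩ := exists_isAdmissible_of_obstructions_eq_empty (by omega)
        (card_pos.1 (by omega)) hempty
      have := hnone S hS
      omega
    have := sum_card_obstructions_le (D := D) (a := a) (n := m + 2) (by omega)
    rw [sum_range_succ] at this
    omega

end Admissible

lemma exists_forall_of_wellFounded {α β : Type*} [Nonempty β] {r : α → α → Prop}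
    (hr : WellFounded r) {P : α → (α → β) → β → Prop} {Q : α → β → Prop}
    (hP : ∀ x f g b, (∀ y, r y x → f y = g y) → P x f b → P x g b)
    (h : ∀ x f, (∀ y, r y x → Q y (f y)) → ∃ b, P x f b ∧ Q x b) :
    ∃ f, ∀ x, P x f (f x) ∧ Q x (f x) := by
  classical
  choose! g hgP hgQ using h
  let extend (x : α) (F : ∀ y, r y x → β) (y : α) : β :=
    if hy : r y x then F y hy else Classical.arbitrary β
  let f : α → β := hr.fix fun x F ↦ g x (extend x F)
  have hf (x : α) : f x = g x (extend x fun y _ ↦ f y) := hr.fix_eq _ x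
  have hext (x : α) : ∀ y, r y x → extend x (fun y _ ↦ f y) y = f y := fun _ hy ↦ dif_pos hy
  have hQ (x : α) : Q x (f x) := by
    induction x using hr.induction with
    | _ x ih =>
      rw [hf]
      exact hgQ x _ fun y hy ↦ (hext x y hy).symm ▸ ih y hy
  refine ⟨f, fun x ↦ ⟨hP x _ _ _ (hext x) ?_, hQ x⟩⟩
  rw [hf]
  exact hgP x _ fun y hy ↦ (hext x y hy).symm ▸ hQ y

section ColorClass

variable {V κ : Type*} {G : SimpleGraph V} {c : Sym2 V → κ} {i : κ}

/-- The subgraph of `G` formed by the edges to which the edge-coloring `c` gives the color `i`. -/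
def colorClass (G : SimpleGraph V) (c : Sym2 V → κ) (i : κ) : SimpleGraph V :=
  SimpleGraph.fromEdgeSet {e | e ∈ G.edgeSet ∧ c e = i}

lemma colorClass_adj {x y : V} : (colorClass G c i).Adj x y ↔ G.Adj x y ∧ c s(x, y) = i := by
  simp only [colorClass, SimpleGraph.fromEdgeSet_adj, Set.mem_ofPred_eq, SimpleGraph.mem_edgeSet]
  exact ⟨And.left, fun h ↦ ⟨h, h.1.ne⟩⟩

end ColorClass

theorem existsUnique_adj_dist_eq_succ {V : Type*} {T : SimpleGraph V} (hT : T.IsTree) {r x : V}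
    (hx : x ≠ r) : ∃! y, T.Adj x y ∧ T.dist r x = T.dist r y + 1 := by
  obtain ⟨p, hp, hlen⟩ := hT.connected.exists_path_of_dist r x
  have hnil : ¬ p.Nil := fun h ↦ hx h.eq.symm
  refine ⟨p.penultimate, ⟨(p.adj_penultimate hnil).symm, ?_⟩, fun y ⟨hxy, hy⟩ ↦ ?_⟩
  · have hle : T.dist r p.penultimate ≤ p.length - 1 := by
      simpa [SimpleGraph.Walk.dropLast] using T.dist_le p.dropLast
    have hpos := SimpleGraph.Walk.not_nil_iff_lt_length.1 hnil
    have := hT.dist_eq_dist_add_one_of_adj r (p.adj_penultimate hnil)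
    omega
  · obtain ⟨q, -, hq⟩ := hT.connected.exists_path_of_dist r y
    have hpath : (q.concat hxy.symm).IsPath :=
      SimpleGraph.Walk.isPath_of_length_eq_dist _ (by rw [SimpleGraph.Walk.length_concat, hq, hy])
    simpa using congrArg SimpleGraph.Walk.penultimate
      ((hT.existsUnique_path r x).unique hpath hp)

/-- A rooting of the tree `T` at its edge `s(root, parent root)`: the two ends of that edge are each
other's parents, and every other vertex has as its parent its neighbor towards that edge. The field
`depth` plays the part of the distance to `root`. -/
structure EdgeRooting {V : Type*} (T : SimpleGraph V) where
  root : V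
  parent : V → V
  depth : V → ℕ
  adj_parent : ∀ x, T.Adj x (parent x)
  parent_parent_root : parent (parent root) = root
  parent_eq_of_adj : ∀ ⦃x y⦄, T.Adj x y → y ≠ parent x → parent y = x
  depth_eq : ∀ ⦃x⦄, x ≠ root → depth x = depth (parent x) + 1

theorem exists_edgeRooting {V : Type*} {T : SimpleGraph V} (hT : T.IsTree) {r s : V}
    (hrs : T.Adj r s) : ∃ ρ : EdgeRooting T, ρ.root = r ∧ ρ.parent r = s := by
  classical
  choose! up hup hunique using fun x (hx : x ≠ r) ↦ existsUnique_adj_dist_eq_succ hT hx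
  have up_eq {x y : V} (hxy : T.Adj x y) (hd : T.dist r y = T.dist r x + 1) : y ≠ r ∧ up y = x := by
    have hy : y ≠ r := by rintro rfl; simp at hd
    exact ⟨hy, (hunique y hy x ⟨hxy.symm, hd⟩).symm⟩
  have dist_eq_one {y : V} (hy : T.Adj r y) : T.dist r y = T.dist r r + 1 := by simpa using hy
  have hroot (y : V) (hy : T.Adj r y) : Function.update up r s y = r := by
    obtain ⟨hyr, hupy⟩ := up_eq hy (dist_eq_one hy)
    rwa [Function.update_of_ne hyr]
  refine ⟨⟨r, Function.update up r s, T.dist r, fun x ↦ ?_, ?_, fun x y hxy hy ↦ ?_, fun x hx ↦ ?_⟩,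
    rfl, ?_⟩
  · obtain rfl | hx := eq_or_ne x r
    · simpa using hrs
    · simpa [hx] using (hup x hx).1
  · simpa using hroot s hrs
  · obtain rfl | hx := eq_or_ne x r
    · exact hroot y hxy
    · rw [Function.update_of_ne hx] at hy
      obtain hd | hd := hT.dist_eq_dist_add_one_of_adj r hxy
      · exact absurd (hunique x hx y ⟨hxy, hd⟩) hy
      · obtain ⟨hyr, hupy⟩ := up_eq hxy hd
        rwa [Function.update_of_ne hyr]
  · simpa [hx] using (hup x hx).2
  · simp

namespace EdgeRooting

variable {V : Type*} {T : SimpleGraph V} (ρ : EdgeRooting T)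

lemma parent_root_ne_root : ρ.parent ρ.root ≠ ρ.root := (ρ.adj_parent ρ.root).ne'

lemma root_edge_of_mutual_parents {x y : V} (hx : ρ.parent x = y) (hy : ρ.parent y = x) :
    (x = ρ.root ∧ y = ρ.parent ρ.root) ∨ (x = ρ.parent ρ.root ∧ y = ρ.root) := by
  by_cases hxr : x = ρ.root
  · exact Or.inl ⟨hxr, hxr ▸ hx.symm⟩
  by_cases hyr : y = ρ.root
  · exact Or.inr ⟨hyr ▸ hy.symm, hyr⟩
  have hdx := ρ.depth_eq hxr
  have hdy := ρ.depth_eq hyr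
  rw [hx] at hdx
  rw [hy] at hdy
  omega

lemma exists_potential {M : Type*} [AddCommMonoid M] (f : V → M) :
    ∃ C : V → M, ∀ x, x ≠ ρ.root → C x = C (ρ.parent x) + f x := by
  refine ⟨fun x ↦ ∑ j ∈ range (ρ.depth x), f (ρ.parent^[j] x), fun x hx ↦ ?_⟩
  simp [ρ.depth_eq hx, sum_range_succ']

lemma exists_edgeColoring {κ : Type*} {C : V → κ} (hC : C (ρ.parent ρ.root) = C ρ.root) :
    ∃ c : Sym2 V → κ, ∀ x, c s(x, ρ.parent x) = C x := by
  have hfactors : C.FactorsThrough fun x ↦ s(x, ρ.parent x) := fun x y hxy ↦ by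
    obtain ⟨h, -⟩ | ⟨hx, hy⟩ := Sym2.eq_iff.1 hxy
    · rw [h]
    · obtain ⟨rfl, rfl⟩ | ⟨rfl, rfl⟩ := ρ.root_edge_of_mutual_parents hy hx.symm
      exacts [hC.symm, hC]
  exact ⟨Function.extend _ C fun _ ↦ C ρ.root, hfactors.extend_apply _⟩

variable [DecidableEq V] [T.LocallyFinite]

/-- The neighbors of `x` other than its parent. -/
def children (x : V) : Finset V := (T.neighborFinset x).erase (ρ.parent x)

variable {ρ} {x y : V} {R : V → Finset V} {c : Sym2 V → Fin 2}

lemma mem_children : y ∈ ρ.children x ↔ T.Adj x y ∧ y ≠ ρ.parent x := by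
  simp [children, and_comm]

variable (ρ) in
lemma card_children_add_one (x : V) : #(ρ.children x) + 1 = (T.neighborSet x).ncard := by
  rw [children, card_erase_add_one (by simpa using ρ.adj_parent x),
    ← SimpleGraph.coe_neighborFinset, Set.ncard_coe_finset]

lemma parent_notMem_children : ρ.parent x ∉ ρ.children x := fun h ↦ (mem_children.1 h).2 rfl

lemma parent_eq_of_mem_children (h : y ∈ ρ.children x) : ρ.parent y = x :=
  ρ.parent_eq_of_adj (mem_children.1 h).1 (mem_children.1 h).2

lemma ne_root_of_mem_children (h : y ∈ ρ.children x) : y ≠ ρ.root := by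
  rintro rfl
  obtain rfl := parent_eq_of_mem_children h
  exact (mem_children.1 h).2 ρ.parent_parent_root.symm

lemma ne_parent_root_of_mem_children (h : y ∈ ρ.children x) : y ≠ ρ.parent ρ.root := by
  rintro rfl
  have hx := parent_eq_of_mem_children h
  rw [ρ.parent_parent_root] at hx
  exact (mem_children.1 h).2 (by rw [hx])

lemma depth_of_mem_children (h : y ∈ ρ.children x) : ρ.depth y = ρ.depth x + 1 := by
  rw [ρ.depth_eq (ne_root_of_mem_children h), parent_eq_of_mem_children h]

lemma mem_children_or_mem_children_or_root_edge (h : T.Adj x y) :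
    y ∈ ρ.children x ∨ x ∈ ρ.children y ∨ s(x, y) = s(ρ.root, ρ.parent ρ.root) := by
  by_cases hy : y = ρ.parent x
  · by_cases hx : x = ρ.parent y
    · exact .inr <| .inr <| Sym2.eq_iff.2 <| ρ.root_edge_of_mutual_parents hy.symm hx.symm
    · exact .inr <| .inl <| mem_children.2 ⟨h.symm, hx⟩
  · exact .inl <| mem_children.2 ⟨h, hy⟩

variable (ρ) in
lemma wellFounded_mem_children [Finite V] : WellFounded fun y x ↦ y ∈ ρ.children x := by
  obtain ⟨N, hN⟩ := (Set.finite_range ρ.depth).bddAbove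
  refine Subrelation.wf (fun {y x} h ↦ ?_) (measure fun x ↦ N - ρ.depth x).wf
  have hy : ρ.depth y ≤ N := hN ⟨y, rfl⟩
  have := depth_of_mem_children h
  change N - ρ.depth y < N - ρ.depth x
  omega

variable (ρ) in
/-- An admissible choice at every vertex `x` of the set `R x` of children of `x` whose edge to `x`
continues the color of the parent edge of `x`. -/
def IsSelection (R : V → Finset V) : Prop :=
  ∀ x, IsAdmissible (ρ.children x) (fun y ↦ #(R y) + 1) (R x)

theorem exists_isSelection [Finite V] {Q : V → Finset V → Prop}
    (h : ∀ (x : V) (R : V → Finset V), (∀ y ∈ ρ.children x, Q y (R y)) →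
      ∃ S, IsAdmissible (ρ.children x) (fun y ↦ #(R y) + 1) S ∧ Q x S) :
    ∃ R, ρ.IsSelection R ∧ ∀ x, Q x (R x) := by
  obtain ⟨R, hR⟩ := exists_forall_of_wellFounded ρ.wellFounded_mem_children
    (P := fun x (R : V → Finset V) ↦ IsAdmissible (ρ.children x) fun y ↦ #(R y) + 1)
    (fun x f g S hfg hS ↦ hS.congr fun y hy ↦ by rw [hfg y hy]) h
  exact ⟨R, fun x ↦ (hR x).1, fun x ↦ (hR x).2⟩

variable (ρ) in
/-- The edge-coloring `c` induces `R` as in `IsSelection`: the children of `x` whose edge to `x` has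
the color of the parent edge of `x` are those in `R x`. -/
def Induces (c : Sym2 V → Fin 2) (R : V → Finset V) : Prop :=
  ∀ ⦃x y⦄, y ∈ ρ.children x → (c s(x, y) = c s(x, ρ.parent x) ↔ y ∈ R x)

variable (ρ) in
theorem exists_induces (R : V → Finset V) : ∃ c, ρ.Induces c R := by
  obtain ⟨C, hC⟩ := ρ.exists_potential fun y ↦
    if y = ρ.parent ρ.root ∨ y ∈ R (ρ.parent y) then (0 : Fin 2) else 1
  obtain ⟨c, hc⟩ := ρ.exists_edgeColoring (C := C) <| by
    simpa [ρ.parent_parent_root] using hC _ ρ.parent_root_ne_root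
  refine ⟨c, fun x y hy ↦ ?_⟩
  have hyx := parent_eq_of_mem_children hy
  have hcy : c s(x, y) = C y := by rw [← hc y, hyx, Sym2.eq_swap]
  rw [hcy, hc, hC y (ne_root_of_mem_children hy), hyx]
  simp [ne_parent_root_of_mem_children hy]

namespace Induces

lemma ncard_neighborSet_parent_color (hc : ρ.Induces c R) (hR : R x ⊆ ρ.children x) :
    ((colorClass T c (c s(x, ρ.parent x))).neighborSet x).ncard = #(R x) + 1 := by
  have hset : (colorClass T c (c s(x, ρ.parent x))).neighborSet x = insert (ρ.parent x) (R x) := by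
    ext y
    rw [SimpleGraph.mem_neighborSet, colorClass_adj, coe_insert, Set.mem_insert_iff, mem_coe]
    by_cases hy : y = ρ.parent x
    · simp [hy, ρ.adj_parent]
    · simp only [hy, false_or]
      exact ⟨fun h ↦ (hc (mem_children.2 ⟨h.1, hy⟩)).1 h.2,
        fun h ↦ ⟨(mem_children.1 (hR h)).1, (hc (hR h)).2 h⟩⟩
  rw [hset, Set.ncard_coe_finset,
    card_insert_of_notMem fun h ↦ parent_notMem_children (hR h)]

lemma ncard_neighborSet_of_ne_parent_color (hc : ρ.Induces c R) {i : Fin 2}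
    (hi : i ≠ c s(x, ρ.parent x)) :
    ((colorClass T c i).neighborSet x).ncard = #(ρ.children x \ R x) := by
  have hset : (colorClass T c i).neighborSet x = ↑(ρ.children x \ R x) := by
    ext y
    rw [SimpleGraph.mem_neighborSet, colorClass_adj, mem_coe, mem_sdiff]
    by_cases hy : y ∈ ρ.children x
    · have hcolor : c s(x, y) = i ↔ c s(x, y) ≠ c s(x, ρ.parent x) := by omega
      rw [hcolor, Ne, hc hy, iff_true_intro (mem_children.1 hy).1, iff_true_intro hy]
    · refine iff_of_false (fun ⟨hxy, hcy⟩ ↦ hy (mem_children.2 ⟨hxy, ?_⟩)) (fun h ↦ hy h.1)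
      rintro rfl
      exact hi hcy.symm
  rw [hset, Set.ncard_coe_finset]

lemma ncard_ne_of_mem_children (hc : ρ.Induces c R) (hR : ρ.IsSelection R)
    (hy : y ∈ ρ.children x) :
    ((colorClass T c (c s(x, y))).neighborSet x).ncard ≠
      ((colorClass T c (c s(x, y))).neighborSet y).ncard := by
  have hdeg_y : ((colorClass T c (c s(x, y))).neighborSet y).ncard = #(R y) + 1 := by
    rw [← hc.ncard_neighborSet_parent_color (hR y).subset, parent_eq_of_mem_children hy,
      Sym2.eq_swap]
  rw [hdeg_y, ne_comm]
  by_cases hyR : y ∈ R x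
  · rw [(hc hy).2 hyR, hc.ncard_neighborSet_parent_color (hR x).subset]
    exact (hR x).ne_of_mem y hyR
  · rw [hc.ncard_neighborSet_of_ne_parent_color ((hc hy).not.2 hyR)]
    exact (hR x).ne_of_mem_sdiff y (mem_sdiff.2 ⟨hy, hyR⟩)

lemma ncard_ne_of_root_edge (hc : ρ.Induces c R) (hR : ρ.IsSelection R)
    (hroot : #(R ρ.root) ≠ #(R (ρ.parent ρ.root))) :
    ((colorClass T c (c s(ρ.root, ρ.parent ρ.root))).neighborSet ρ.root).ncard ≠
      ((colorClass T c (c s(ρ.root, ρ.parent ρ.root))).neighborSet (ρ.parent ρ.root)).ncard := by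
  have hdeg := hc.ncard_neighborSet_parent_color (hR (ρ.parent ρ.root)).subset
  rw [ρ.parent_parent_root, Sym2.eq_swap] at hdeg
  rw [hdeg, hc.ncard_neighborSet_parent_color (hR ρ.root).subset]
  omega

end Induces

theorem hasLIEC_two_of_isSelection (hR : ρ.IsSelection R)
    (hroot : #(R ρ.root) ≠ #(R (ρ.parent ρ.root))) : HasLIEC T 2 := by
  obtain ⟨c, hc⟩ := ρ.exists_induces R
  refine ⟨c, fun i x y hxy ↦ ?_⟩
  obtain ⟨hadj, rfl⟩ := colorClass_adj.1 hxy
  obtain hy | hx | he := mem_children_or_mem_children_or_root_edge (ρ := ρ) hadj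
  · exact hc.ncard_ne_of_mem_children hR hy
  · rw [Sym2.eq_swap]
    exact (hc.ncard_ne_of_mem_children hR hx).symm
  · have hne := hc.ncard_ne_of_root_edge hR hroot
    rw [he]
    obtain ⟨rfl, rfl⟩ | ⟨rfl, rfl⟩ := Sym2.eq_iff.1 he
    exacts [hne, hne.symm]

end EdgeRooting

/-- A `(2k+1)`-thread together with its two neighbors `w 0` and `w (2k+2)`, which have degree at
least 3. -/
structure IsOddThread {V : Type*} (T : SimpleGraph V) (k : ℕ) (w : Fin (2 * k + 3) → V) : Prop where
  injective : Function.Injective w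
  adj : ∀ i : Fin (2 * k + 2), T.Adj (w i.castSucc) (w i.succ)
  three_le_first : 3 ≤ (T.neighborSet (w 0)).ncard
  three_le_last : 3 ≤ (T.neighborSet (w (Fin.last (2 * k + 2)))).ncard
  eq_two_of_interior : ∀ i, i ≠ 0 → i ≠ Fin.last (2 * k + 2) → (T.neighborSet (w i)).ncard = 2

namespace IsOddThread

variable {V : Type*} {T : SimpleGraph V} {k : ℕ} {w : Fin (2 * k + 3) → V} {ρ : EdgeRooting T}

lemma parent_succ (hw : IsOddThread T k w) (hroot : ρ.root = w 0) (hparent : ρ.parent (w 0) = w 1)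
    (i : Fin (2 * k + 2)) : ρ.parent (w i.succ) = w i.castSucc := by
  induction i using Fin.induction with
  | zero => simpa [hroot, hparent] using ρ.parent_parent_root
  | succ i ih =>
    refine ρ.parent_eq_of_adj (hw.adj i.succ) ?_
    rw [← Fin.succ_castSucc, ih]
    refine hw.injective.ne ?_
    simp only [Ne, Fin.ext_iff, Fin.val_succ, Fin.val_castSucc]
    omega

variable [DecidableEq V] [T.LocallyFinite]

lemma children_eq_singleton (hw : IsOddThread T k w) (hroot : ρ.root = w 0)
    (hparent : ρ.parent (w 0) = w 1) (i : Fin (2 * k + 1)) :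
    ρ.children (w i.castSucc.succ) = {w i.succ.succ} := by
  have hmem : w i.succ.succ ∈ ρ.children (w i.castSucc.succ) := by
    rw [EdgeRooting.mem_children, hw.parent_succ hroot hparent]
    refine ⟨hw.adj i.succ, hw.injective.ne ?_⟩
    simp only [Ne, Fin.ext_iff, Fin.val_succ, Fin.val_castSucc]
    omega
  have hdeg : (T.neighborSet (w i.castSucc.succ)).ncard = 2 :=
    hw.eq_two_of_interior _ (Fin.succ_ne_zero _) (Fin.succ_castSucc i ▸ Fin.castSucc_ne_last _)
  have hcard := ρ.card_children_add_one (w i.castSucc.succ)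
  exact (eq_of_subset_of_card_le (singleton_subset_iff.2 hmem) (by rw [card_singleton]; omega)).symm

lemma exists_isAdmissible_interior (hw : IsOddThread T k w) (hroot : ρ.root = w 0)
    (hparent : ρ.parent (w 0) = w 1) (i : Fin (2 * k + 1)) {R : V → Finset V}
    (hR : R (w i.succ.succ) = ∅ ↔ Odd (i.succ.succ : ℕ)) :
    ∃ S, IsAdmissible (ρ.children (w i.castSucc.succ)) (fun y ↦ #(R y) + 1) S ∧
      (S = ∅ ↔ Odd (i.castSucc.succ : ℕ)) := by
  rw [hw.children_eq_singleton hroot hparent]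
  simp only [Fin.val_succ, Fin.val_castSucc, Nat.odd_add_one (n := (i : ℕ) + 1)] at hR ⊢
  by_cases hodd : Odd ((i : ℕ) + 1)
  · have hne : R (w i.succ.succ) ≠ ∅ := fun h ↦ hR.1 h hodd
    exact ⟨∅, isAdmissible_empty (by simpa using hne), by simpa using hodd⟩
  · exact ⟨_, isAdmissible_self (by simp [hR.2 hodd]), by simpa using hodd⟩

lemma exists_isAdmissible_alternating (hw : IsOddThread T k w) (hroot : ρ.root = w 0)
    (hparent : ρ.parent (w 0) = w 1) (x : V) {R : V → Finset V}
    (hR : ∀ y ∈ ρ.children x, ∀ i, w i = y → (R y = ∅ ↔ Odd (i : ℕ))) :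
    ∃ S, IsAdmissible (ρ.children x) (fun y ↦ #(R y) + 1) S ∧
      ∀ i, w i = x → (S = ∅ ↔ Odd (i : ℕ)) := by
  obtain ⟨S, hS, hcard⟩ := exists_isAdmissible (ρ.children x) fun y ↦ #(R y) + 1
  by_cases hx : ∃ i, w i = x
  swap
  · exact ⟨S, hS, fun i hi ↦ (hx ⟨i, hi⟩).elim⟩
  obtain ⟨i, rfl⟩ := hx
  suffices h : ∃ S, IsAdmissible (ρ.children (w i)) (fun y ↦ #(R y) + 1) S ∧
      (S = ∅ ↔ Odd (i : ℕ)) by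
    obtain ⟨S, hS, hSi⟩ := h
    exact ⟨S, hS, fun j hj ↦ hw.injective hj ▸ hSi⟩
  have hne (hdeg : 3 ≤ (T.neighborSet (w i)).ncard) : S ≠ ∅ := by
    have := ρ.card_children_add_one (w i)
    exact nonempty_iff_ne_empty.1 (card_pos.1 (by omega))
  obtain rfl | ⟨j, rfl⟩ := i.eq_zero_or_eq_succ
  · exact ⟨S, hS, by simp [hne hw.three_le_first]⟩
  obtain ⟨j, rfl⟩ | rfl := j.eq_castSucc_or_eq_last
  · refine hw.exists_isAdmissible_interior hroot hparent j (hR _ ?_ _ rfl)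
    simp [hw.children_eq_singleton hroot hparent]
  · exact ⟨S, hS, by simp [hne hw.three_le_last, parity_simps]⟩

end IsOddThread

theorem tree_odd_thread_LIEC_general {V : Type*} [Finite V] {T : SimpleGraph V} (hT : T.IsTree)
    {k : ℕ} {w : Fin (2 * k + 3) → V} (hw : IsOddThread T k w) : HasLIEC T 2 := by
  classical
  have := Fintype.ofFinite V
  obtain ⟨ρ, hroot, hparent⟩ : ∃ ρ : EdgeRooting T, ρ.root = w 0 ∧ ρ.parent (w 0) = w 1 :=
    exists_edgeRooting hT (hw.adj 0)
  obtain ⟨R, hR, halternate⟩ := ρ.exists_isSelection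
    (Q := fun x S ↦ ∀ i, w i = x → (S = ∅ ↔ Odd (i : ℕ)))
    fun x _ ↦ hw.exists_isAdmissible_alternating hroot hparent x
  have hempty : R (w 1) = ∅ := (halternate _ 1 rfl).2 (by simp)
  have hnonempty : R (w 0) ≠ ∅ := (halternate _ 0 rfl).not.2 (by simp)
  refine EdgeRooting.hasLIEC_two_of_isSelection hR ?_
  rw [hroot, hparent, hempty]
  simpa using hnonempty

/-- If a tree `T` contains a `(2k+1)`-thread both of whose ends are adjacent to vertices of
degree 3, i.e. a path `w 0 = u_1, w 1 = v_1, …, w (2k+1) = v_{2k+1}, w (2k+2) = u_2` with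
`d(u_1) = d(u_2) = 3` and all internal vertices of degree 2, then `T` admits a locally
irregular edge-coloring with at most 2 colors. -/
theorem tree_odd_thread_LIEC {V : Type*} [Fintype V] (T : SimpleGraph V)
    (hT : T.IsTree) (k : ℕ) (hk : 1 ≤ k) (w : Fin (2 * k + 3) → V)
    (hinj : Function.Injective w)
    (hadj : ∀ i : Fin (2 * k + 2), T.Adj (w i.castSucc) (w i.succ))
    (hfirst : (T.neighborSet (w 0)).ncard = 3)
    (hlast : (T.neighborSet (w (Fin.last (2 * k + 2)))).ncard = 3)
    (hmid : ∀ i : Fin (2 * k + 3), i ≠ 0 → i ≠ Fin.last (2 * k + 2) →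
      (T.neighborSet (w i)).ncard = 2) :
    HasLIEC T 2 :=
  tree_odd_thread_LIEC_general hT ⟨hinj, hadj, hfirst.ge, hlast.ge, hmid⟩
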